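/- Let k ≥ 2 be an integer, α = (1+√(1+4/k))/2, β = kα+1, a_n = ⌊nα⌋, b_n = ⌊nβ⌋, c_n = a_n − a_{n−1}, d_n = b_n − b_{n−1}. Fix i ∈ {1,…,k−1}. Then for all n ≥ 0, the number of indices j with 1 ≤ j ≤ g^i_n and c_j = 2 equals f^i_n; and for all n ≥ 1, the number of indices j with 1 ≤ j ≤ g^i_n and d_j = k+1 equals g^i_{n−1}. -/

import Mathlib

/-- α = (1 + √(1 + 4/k)) / 2 -/
noncomputable def alphaK (k : ℕ) : ℝ := (1 + Real.sqrt (1 + 4 / (k : ℝ))) / 2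

/-- β = k·α + 1 -/
noncomputable def betaK (k : ℕ) : ℝ := (k : ℝ) * alphaK k + 1

/-- a_n = ⌊n·α⌋ -/
noncomputable def aSeq (k n : ℕ) : ℤ := ⌊(n : ℝ) * alphaK k⌋

/-- b_n = ⌊n·β⌋ -/
noncomputable def bSeq (k n : ℕ) : ℤ := ⌊(n : ℝ) * betaK k⌋

/-- c_n = a_n − a_{n−1} (used for n ≥ 1) -/
noncomputable def cSeq (k n : ℕ) : ℤ := aSeq k n - aSeq k (n - 1)

/-- d_n = b_n − b_{n−1} (used for n ≥ 1) -/
noncomputable def dSeq (k n : ℕ) : ℤ := bSeq k n - bSeq k (n - 1)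

/-- the pair (f^i_n, g^i_n): (f^i_0,g^i_0) = (0,i+1),
    (f^i_n, g^i_n) = (f^i_{n−1} + g^i_{n−1}, k·f^i_{n−1} + (k+1)·g^i_{n−1} + i). -/
def fg (k i : ℕ) : ℕ → ℕ × ℕ
  | 0 => (0, i + 1)
  | n + 1 => ((fg k i n).1 + (fg k i n).2,
      k * (fg k i n).1 + (k + 1) * (fg k i n).2 + i)

/-!
Put `α = alphaK k` and `β = betaK k`. The pairs `(f_n, g_n)` are generated by the two floor
sequences: `f_{n+1} = a_{g_n}` and `g_{n+1} = b_{g_n}`. Indeed, since `k α (α - 1) = 1`, the error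
`g_n β - g_{n+1}` shrinks by the factor `1 - α⁻¹ ∈ (0, 1)` at each step, and its initial value
`α⁻¹ (1 - i (α - 1))` lies in `(0, 1)` as soon as `i < k`.

On the other hand `c_j ∈ {1, 2}` and `d_j ∈ {k + 1, k + 2}`, so by telescoping the numbers of
`1 ≤ j ≤ N` with `c_j = 2` and with `d_j = k + 1` are `a_N - N` and `(k + 2) N - b_N`. At `N = g_n`
these are `f_{n+1} - g_n = f_n` and `(k + 2) g_n - g_{n+1} = g_{n-1}`.
-/

theorem floor_succ_mul_sub_floor_mul {R : Type*} [Ring R] [LinearOrder R] [IsStrictOrderedRing R]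
    [FloorRing R] (x : R) (n : ℕ) :
    ⌊((n + 1 : ℕ) : R) * x⌋ - ⌊(n : R) * x⌋ = ⌊x⌋ ∨
      ⌊((n + 1 : ℕ) : R) * x⌋ - ⌊(n : R) * x⌋ = ⌊x⌋ + 1 := by
  have lower := Int.le_floor_add (n * x) x
  have upper := Int.le_floor_add_floor (n * x) x
  rw [Nat.cast_succ, add_one_mul]
  lia

section Telescoping

variable {u : ℕ → ℤ} {m : ℤ}

theorem card_filter_sub_eq_add_one
    (hu : ∀ n, u (n + 1) - u n = m ∨ u (n + 1) - u n = m + 1) (N : ℕ) :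
    (((Finset.Icc 1 N).filter fun j => u j - u (j - 1) = m + 1).card : ℤ) =
      u N - u 0 - m * N := by
  rw [Finset.natCast_card_filter]
  induction N with
  | zero => simp
  | succ N ih =>
    rw [Finset.sum_Icc_succ_top N.succ_pos, ih, Nat.add_sub_cancel, Nat.cast_succ]
    rcases hu N with h | h
    · rw [if_neg (by lia)]
      linear_combination -h
    · rw [if_pos h]
      linear_combination -h

theorem card_filter_sub_eq
    (hu : ∀ n, u (n + 1) - u n = m ∨ u (n + 1) - u n = m + 1) (N : ℕ) :
    (((Finset.Icc 1 N).filter fun j => u j - u (j - 1) = m).card : ℤ) =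
      (m + 1) * N - (u N - u 0) := by
  -- Negation swaps the two step sizes.
  have count_neg := card_filter_sub_eq_add_one (u := -u) (m := -(m + 1))
    (fun n => by have := hu n; simp only [Pi.neg_apply]; lia) N
  have same_indices (j : ℕ) : (-u) j - (-u) (j - 1) = -(m + 1) + 1 ↔ u j - u (j - 1) = m := by
    simp only [Pi.neg_apply]
    lia
  rw [Finset.filter_congr fun j _ => same_indices j, Pi.neg_apply, Pi.neg_apply] at count_neg
  linear_combination count_neg

end Telescoping

section Slopes

variable {k : ℕ}

theorem alphaK_quadratic (hk : 0 < k) : k * alphaK k * (alphaK k - 1) = 1 := by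
  have hsqrt : Real.sqrt (1 + 4 / (k : ℝ)) ^ 2 = 1 + 4 / k := Real.sq_sqrt (by positivity)
  have hcancel : (k : ℝ) * (4 / k) = 4 := by field_simp
  unfold alphaK
  linear_combination (k : ℝ) / 4 * hsqrt + hcancel / 4

theorem one_lt_alphaK (hk : 0 < k) : 1 < alphaK k := by
  have hsqrt : 1 < Real.sqrt (1 + 4 / (k : ℝ)) := by
    rw [Real.lt_sqrt zero_le_one, one_pow, lt_add_iff_pos_right]
    positivity
  unfold alphaK
  linarith

theorem inv_alphaK (hk : 0 < k) : (alphaK k)⁻¹ = k * (alphaK k - 1) :=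
  inv_eq_of_mul_eq_one_right (by linear_combination alphaK_quadratic hk)

theorem inv_alphaK_pos (hk : 0 < k) : 0 < (alphaK k)⁻¹ :=
  inv_pos.2 (zero_lt_one.trans (one_lt_alphaK hk))

theorem inv_alphaK_lt_one (hk : 0 < k) : (alphaK k)⁻¹ < 1 :=
  inv_lt_one_of_one_lt₀ (one_lt_alphaK hk)

theorem betaK_eq (hk : 0 < k) : betaK k = k + 1 + (alphaK k)⁻¹ := by
  rw [inv_alphaK hk, betaK]
  ring

theorem floor_alphaK (hk : 0 < k) : ⌊alphaK k⌋ = 1 := by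
  have hk_cast : (1 : ℝ) ≤ k := by exact_mod_cast hk
  have hfract := inv_alphaK hk ▸ inv_alphaK_lt_one hk
  have hlt : alphaK k - 1 < 1 := by
    have := le_mul_of_one_le_left (sub_pos.2 (one_lt_alphaK hk)).le hk_cast
    exact this.trans_lt hfract
  rw [Int.floor_eq_iff, Int.cast_one]
  exact ⟨(one_lt_alphaK hk).le, by linarith⟩

theorem floor_betaK (hk : 0 < k) : ⌊betaK k⌋ = k + 1 := by
  rw [betaK_eq hk, Int.floor_eq_iff]
  push_cast
  exact ⟨by linarith [inv_alphaK_pos hk], by linarith [inv_alphaK_lt_one hk]⟩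

theorem card_filter_cSeq_eq_two (hk : 0 < k) (N : ℕ) :
    (((Finset.Icc 1 N).filter fun j => cSeq k j = 2).card : ℤ) = aSeq k N - N := by
  have hstep (n : ℕ) : aSeq k (n + 1) - aSeq k n = 1 ∨ aSeq k (n + 1) - aSeq k n = 1 + 1 :=
    floor_alphaK hk ▸ floor_succ_mul_sub_floor_mul (alphaK k) n
  calc _ = aSeq k N - aSeq k 0 - 1 * N := card_filter_sub_eq_add_one hstep N
    _ = aSeq k N - N := by simp [aSeq]

theorem card_filter_dSeq_eq_add_one (hk : 0 < k) (N : ℕ) :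
    (((Finset.Icc 1 N).filter fun j => dSeq k j = (k : ℤ) + 1).card : ℤ) =
      (k + 2) * N - bSeq k N := by
  have hstep (n : ℕ) :
      bSeq k (n + 1) - bSeq k n = k + 1 ∨ bSeq k (n + 1) - bSeq k n = k + 1 + 1 :=
    floor_betaK hk ▸ floor_succ_mul_sub_floor_mul (betaK k) n
  have hzero : bSeq k 0 = 0 := by simp [bSeq]
  calc _ = (k + 1 + 1) * N - (bSeq k N - bSeq k 0) := card_filter_sub_eq hstep N
    _ = (k + 2) * N - bSeq k N := by rw [hzero]; ring

theorem aSeq_eq_div (hk : 0 < k) (n : ℕ) : aSeq k n = (bSeq k n - n) / k := by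
  have hmul : (n : ℝ) * betaK k = k * (n * alphaK k) + n := by
    unfold betaK
    ring
  rw [bSeq, hmul, Int.floor_add_natCast, add_sub_cancel_right,
    Int.natCast_mul_floor_div_cancel hk.ne', aSeq]

end Slopes

section Recursion

variable {k i : ℕ}

theorem fg_snd_mul_betaK_sub (hk : 0 < k) (n : ℕ) :
    (fg k i n).2 * betaK k - (fg k i (n + 1)).2 =
      (1 - (alphaK k)⁻¹) ^ n * ((alphaK k)⁻¹ * (1 - i * (alphaK k - 1))) := by
  have hquad := alphaK_quadratic hk
  rw [inv_alphaK hk, betaK]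
  induction n with
  | zero =>
    simp only [fg]
    push_cast
    linear_combination (i : ℝ) * hquad
  | succ n ih =>
    rw [pow_succ', mul_assoc, ← ih]
    simp only [fg]
    push_cast
    linear_combination (k * (fg k i n).2 : ℝ) * hquad

theorem fg_snd_mul_betaK_sub_mem_Ico (hik : i < k) (n : ℕ) :
    ((fg k i n).2 * betaK k - (fg k i (n + 1)).2 : ℝ) ∈ Set.Ico 0 1 := by
  have hk : 0 < k := i.zero_le.trans_lt hik
  have hinv_pos := inv_alphaK_pos hk
  have hinv_lt := inv_alphaK_lt_one hk
  have hfract_pos : 0 < alphaK k - 1 := sub_pos.2 (one_lt_alphaK hk)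
  have hi_fract_nonneg : 0 ≤ i * (alphaK k - 1) := by positivity
  have hi_fract_le : i * (alphaK k - 1) ≤ (alphaK k)⁻¹ := by
    rw [inv_alphaK hk]
    gcongr
  have hratio : 0 ≤ 1 - (alphaK k)⁻¹ := by linarith
  have hpow_le : (1 - (alphaK k)⁻¹) ^ n ≤ 1 := pow_le_one₀ hratio (by linarith)
  have hinit_nonneg : 0 ≤ (alphaK k)⁻¹ * (1 - i * (alphaK k - 1)) :=
    mul_nonneg hinv_pos.le (by linarith)
  have hinit_lt : (alphaK k)⁻¹ * (1 - i * (alphaK k - 1)) < 1 :=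
    (mul_le_of_le_one_right hinv_pos.le (by linarith)).trans_lt hinv_lt
  rw [fg_snd_mul_betaK_sub hk]
  exact ⟨mul_nonneg (pow_nonneg hratio n) hinit_nonneg,
    (mul_le_of_le_one_left hinit_nonneg hpow_le).trans_lt hinit_lt⟩

theorem bSeq_fg_snd (hik : i < k) (n : ℕ) : bSeq k (fg k i n).2 = (fg k i (n + 1)).2 := by
  obtain ⟨hnonneg, hlt⟩ := fg_snd_mul_betaK_sub_mem_Ico hik n
  rw [bSeq, Int.floor_eq_iff, Int.cast_natCast]
  exact ⟨sub_nonneg.1 hnonneg, sub_lt_iff_lt_add'.1 hlt⟩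

theorem aSeq_fg_snd (hik : i < k) (n : ℕ) : aSeq k (fg k i n).2 = (fg k i (n + 1)).1 := by
  have hk : 0 < k := i.zero_le.trans_lt hik
  have hdiff : ((fg k i (n + 1)).2 - (fg k i n).2 : ℤ) = i + k * (fg k i (n + 1)).1 := by
    simp only [fg]
    push_cast
    ring
  rw [aSeq_eq_div hk, bSeq_fg_snd hik, hdiff,
    Int.add_mul_ediv_left _ _ (by exact_mod_cast hk.ne'),
    Int.ediv_eq_zero_of_lt i.cast_nonneg (by exact_mod_cast hik), zero_add]

end Recursion

theorem prefix_counts_general (k i : ℕ) (hik : i < k) :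
    (∀ n : ℕ,
      ((Finset.Icc 1 (fg k i n).2).filter (fun j => cSeq k j = 2)).card
        = (fg k i n).1) ∧
    (∀ n : ℕ, 1 ≤ n →
      ((Finset.Icc 1 (fg k i n).2).filter (fun j => dSeq k j = (k : ℤ) + 1)).card
        = (fg k i (n - 1)).2) := by
  have hk : 0 < k := i.zero_le.trans_lt hik
  refine ⟨fun n => ?_, fun n hn => ?_⟩
  · zify
    rw [card_filter_cSeq_eq_two hk, aSeq_fg_snd hik]
    simp only [fg]
    push_cast
    ring
  · obtain ⟨n, rfl⟩ := Nat.exists_eq_add_of_le' hn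
    zify
    rw [card_filter_dSeq_eq_add_one hk, bSeq_fg_snd hik, Nat.add_sub_cancel]
    simp only [fg]
    push_cast
    ring

/-- In the prefix of length g^i_n there are exactly f^i_n indices j with
    c_j = 2 (n ≥ 0), and, for n ≥ 1, exactly g^i_{n−1} indices j with
    d_j = k+1. -/
theorem prefix_counts (k : ℕ) (hk : 2 ≤ k) (i : ℕ) (hi1 : 1 ≤ i) (hik : i ≤ k - 1) :
    (∀ n : ℕ,
      ((Finset.Icc 1 (fg k i n).2).filter (fun j => cSeq k j = 2)).card
        = (fg k i n).1) ∧
    (∀ n : ℕ, 1 ≤ n →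
      ((Finset.Icc 1 (fg k i n).2).filter (fun j => dSeq k j = (k : ℤ) + 1)).card
        = (fg k i (n - 1)).2) :=
  prefix_counts_general k i (by lia)
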